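/- Let n ≥ 2, p ≥ 2, let Ω ⊆ ℝⁿ be open, and let u : Ω → ℝ^p be an energy minimizing map into the unit sphere S^{p−1} with weak gradient g. Then for every y ∈ Ω and ρ₀ > 0 with the closed ball B̄_{ρ₀}(y) ⊂ Ω, and every 0 < σ < ρ < ρ₀, the monotonicity identity holds: ρ^{2−n} ∫_{B_ρ(y)} |Du|² − σ^{2−n} ∫_{B_σ(y)} |Du|² = 2 ∫_{B_ρ(y)∖B_σ(y)} |x−y|^{2−n} ‖g(x)((x−y)/|x−y|)‖² dx. In particular ρ ↦ ρ^{2−n} ∫_{B_ρ(y)} |Du|² is monotone nondecreasing. -/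

import Mathlib

open MeasureTheory Metric Filter Set

noncomputable section

/-- The pointwise energy density `|Du|²(x) = ∑_{i,j} ((g(x)eᵢ)_j)²` associated to a
(weak) gradient `g`. -/
def energyDensity (n p : ℕ)
    (g : EuclideanSpace ℝ (Fin n) →
      (EuclideanSpace ℝ (Fin n) →L[ℝ] EuclideanSpace ℝ (Fin p)))
    (x : EuclideanSpace ℝ (Fin n)) : ℝ :=
  ∑ i : Fin n, ∑ j : Fin p, (g x (EuclideanSpace.single i 1) j) ^ 2

/-- `u` has weak gradient `g` on `Ω`: both are locally integrable on `Ω` and the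
integration-by-parts identity holds against every smooth compactly supported test
function with support in `Ω`. -/
def HasWeakGradient (n p : ℕ) (Ω : Set (EuclideanSpace ℝ (Fin n)))
    (u : EuclideanSpace ℝ (Fin n) → EuclideanSpace ℝ (Fin p))
    (g : EuclideanSpace ℝ (Fin n) →
      (EuclideanSpace ℝ (Fin n) →L[ℝ] EuclideanSpace ℝ (Fin p))) : Prop :=
  LocallyIntegrableOn u Ω volume ∧ LocallyIntegrableOn g Ω volume ∧
  ∀ φ : EuclideanSpace ℝ (Fin n) → ℝ, ContDiff ℝ (⊤ : ℕ∞) φ → HasCompactSupport φ →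
    tsupport φ ⊆ Ω → ∀ i : Fin n, ∀ j : Fin p,
      ∫ x in Ω, u x j * fderiv ℝ φ x (EuclideanSpace.single i 1) =
        - ∫ x in Ω, φ x * g x (EuclideanSpace.single i 1) j

/-- `u : Ω → ℝᵖ` is an energy minimizing map into the unit sphere `S^(p-1)` with weak
gradient `g`: `u` has weak gradient `g` with locally integrable energy density,
`‖u‖ = 1` a.e. on `Ω`, and `u` minimizes energy in every ball `B_ρ(y)` with closure in
`Ω` among sphere-valued competitors `w` agreeing with `u` a.e. outside a smaller
concentric ball. -/
def IsEnergyMinimizingToSphere (n p : ℕ) (Ω : Set (EuclideanSpace ℝ (Fin n)))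
    (u : EuclideanSpace ℝ (Fin n) → EuclideanSpace ℝ (Fin p))
    (g : EuclideanSpace ℝ (Fin n) →
      (EuclideanSpace ℝ (Fin n) →L[ℝ] EuclideanSpace ℝ (Fin p))) : Prop :=
  HasWeakGradient n p Ω u g ∧
  LocallyIntegrableOn (energyDensity n p g) Ω volume ∧
  (∀ᵐ x ∂volume.restrict Ω, ‖u x‖ = 1) ∧
  ∀ (y : EuclideanSpace ℝ (Fin n)) (ρ : ℝ), 0 < ρ → closedBall y ρ ⊆ Ω →
    ∀ (w : EuclideanSpace ℝ (Fin n) → EuclideanSpace ℝ (Fin p))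
      (h : EuclideanSpace ℝ (Fin n) →
        (EuclideanSpace ℝ (Fin n) →L[ℝ] EuclideanSpace ℝ (Fin p))),
      HasWeakGradient n p Ω w h →
      LocallyIntegrableOn (energyDensity n p h) Ω volume →
      (∀ᵐ x ∂volume.restrict Ω, ‖w x‖ = 1) →
      (∃ σ : ℝ, σ < ρ ∧ ∀ᵐ x ∂volume.restrict (Ω \ ball y σ), w x = u x) →
      ∫ x in ball y ρ, energyDensity n p g x ≤ ∫ x in ball y ρ, energyDensity n p h x

/-- The regular set of `u`: points of `Ω` having an open neighborhood (inside `Ω`) on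
which `u` agrees almost everywhere with a `C^∞` map. -/
def regSet (n p : ℕ) (Ω : Set (EuclideanSpace ℝ (Fin n)))
    (u : EuclideanSpace ℝ (Fin n) → EuclideanSpace ℝ (Fin p)) :
    Set (EuclideanSpace ℝ (Fin n)) :=
  {x | x ∈ Ω ∧ ∃ V : Set (EuclideanSpace ℝ (Fin n)), IsOpen V ∧ x ∈ V ∧ V ⊆ Ω ∧
    ∃ v : EuclideanSpace ℝ (Fin n) → EuclideanSpace ℝ (Fin p),
      ContDiffOn ℝ (⊤ : ℕ∞) v V ∧ ∀ᵐ z ∂volume.restrict V, u z = v z}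

open scoped RealInnerProductSpace

def rk1 {n : ℕ} (a b : ℝ) (v : EuclideanSpace ℝ (Fin n)) :
    EuclideanSpace ℝ (Fin n) →L[ℝ] EuclideanSpace ℝ (Fin n) :=
  a • ContinuousLinearMap.id ℝ _ + b • (innerSL ℝ v).smulRight v

lemma rk1_apply {n : ℕ} (a b : ℝ) (v x : EuclideanSpace ℝ (Fin n)) :
    rk1 a b v x = a • x + (b * ⟪v, x⟫) • v := by
  simp [rk1, smul_smul]

lemma rk1_det {m : ℕ} (a b : ℝ) (ha : a ≠ 0) (v : EuclideanSpace ℝ (Fin (m+2))) :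
    (rk1 a b v).det = a ^ (m+1) * (a + b * ‖v‖^2) := by
  have : ((rk1 a b v : EuclideanSpace ℝ (Fin (m+2)) →L[ℝ] EuclideanSpace ℝ (Fin (m+2))) :
      EuclideanSpace ℝ (Fin (m+2)) →ₗ[ℝ] EuclideanSpace ℝ (Fin (m+2)))
      = a • LinearMap.transvection ((innerSL ℝ v : EuclideanSpace ℝ (Fin (m+2)) →L[ℝ] ℝ) :
        EuclideanSpace ℝ (Fin (m+2)) →ₗ[ℝ] ℝ) ((b / a) • v) := by
    apply LinearMap.ext
    intro x
    simp only [ContinuousLinearMap.coe_coe, rk1_apply, LinearMap.smul_apply,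
      LinearMap.transvection.apply, smul_add, smul_smul, innerSL_apply_apply]
    congr 2
    field_simp
  rw [ContinuousLinearMap.det, this, LinearMap.det_smul, LinearMap.transvection.det]
  simp only [finrank_euclideanSpace, Fintype.card_fin, ContinuousLinearMap.coe_coe, map_smul,
    innerSL_apply_apply, real_inner_self_eq_norm_sq, smul_eq_mul]
  field_simp
  ring

lemma rk1_inv {n : ℕ} (a b : ℝ) (v x : EuclideanSpace ℝ (Fin n)) (ha : a ≠ 0)
    (hb : a + b * ‖v‖^2 ≠ 0) :
    rk1 a b v (rk1 a⁻¹ (-b / (a * (a + b * ‖v‖^2))) v x) = x := by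
  simp only [rk1_apply, inner_add_right, inner_smul_right, real_inner_self_eq_norm_sq,
    smul_add, smul_smul, add_assoc, ← add_smul]
  have : (a * (-b / (a * (a + b * ‖v‖ ^ 2)) * ⟪v, x⟫) +
      b * (a⁻¹ * ⟪v, x⟫ + -b / (a * (a + b * ‖v‖ ^ 2)) * ⟪v, x⟫ * ‖v‖ ^ 2)) = 0 := by
    field_simp
    ring
  rw [this, mul_inv_cancel₀ ha]
  simp

lemma energyDensity_eq (n p : ℕ) (g : EuclideanSpace ℝ (Fin n) →
      (EuclideanSpace ℝ (Fin n) →L[ℝ] EuclideanSpace ℝ (Fin p)))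
    (x : EuclideanSpace ℝ (Fin n)) :
    energyDensity n p g x = ∑ i : Fin n, ‖g x (EuclideanSpace.single i 1)‖^2 := by
  unfold energyDensity
  congr 1; ext i
  rw [EuclideanSpace.norm_sq_eq]
  simp

lemma sum_single {n : ℕ} (v : EuclideanSpace ℝ (Fin n)) :
    ∑ i : Fin n, v i • EuclideanSpace.single i (1:ℝ) = v := by
  ext j
  simp [Finset.sum_apply, Pi.single_apply]

lemma energyDensity_rk1 (n p : ℕ) (g h : EuclideanSpace ℝ (Fin n) →
      (EuclideanSpace ℝ (Fin n) →L[ℝ] EuclideanSpace ℝ (Fin p)))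
    (x x' v : EuclideanSpace ℝ (Fin n)) (α β : ℝ) (hh : h x' = (g x).comp (rk1 α β v)) :
    energyDensity n p h x' =
      α^2 * energyDensity n p g x + (2 * α * β + β^2 * ‖v‖^2) * ‖g x v‖^2 := by
  rw [energyDensity_eq, energyDensity_eq, hh]
  have h1 : ∀ i, ‖(g x).comp (rk1 α β v) (EuclideanSpace.single i 1)‖^2
      = α^2 * ‖g x (EuclideanSpace.single i 1)‖^2 +
        2 * α * β * ⟪v i • g x (EuclideanSpace.single i 1), g x v⟫ +
        β^2 * ‖g x v‖^2 * (v i)^2 := by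
    intro i
    simp only [ContinuousLinearMap.comp_apply, rk1_apply, map_add, map_smul]
    rw [norm_add_sq_real]
    simp only [norm_smul, inner_smul_left, inner_smul_right, EuclideanSpace.inner_single_right,
      mul_pow, Real.norm_eq_abs, sq_abs]
    simp
    ring
  simp_rw [h1, Finset.sum_add_distrib, ← Finset.mul_sum, ← sum_inner, ← map_smul, ← map_sum,
    sum_single, real_inner_self_eq_norm_sq]
  have : ∑ i, v i ^ 2 = ‖v‖^2 := by rw [EuclideanSpace.norm_sq_eq]; simp
  rw [this]; ring

lemma norm_apply_sq_le (n p : ℕ) (g : EuclideanSpace ℝ (Fin n) →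
      (EuclideanSpace ℝ (Fin n) →L[ℝ] EuclideanSpace ℝ (Fin p)))
    (x v : EuclideanSpace ℝ (Fin n)) :
    ‖g x v‖^2 ≤ energyDensity n p g x * ‖v‖^2 := by
  have h1 : ‖g x v‖ ≤ ∑ i, |v i| * ‖g x (EuclideanSpace.single i 1)‖ := by
    conv_lhs => rw [← sum_single v, map_sum]
    refine (norm_sum_le _ _).trans (le_of_eq ?_)
    simp [norm_smul]
  have h2 := Finset.sum_mul_sq_le_sq_mul_sq Finset.univ (fun i => |v i|)
    (fun i => ‖g x (EuclideanSpace.single i 1)‖)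
  have h3 : ‖v‖^2 = ∑ i, |v i|^2 := by rw [EuclideanSpace.norm_sq_eq]; simp
  rw [energyDensity_eq, h3, mul_comm]
  exact (pow_le_pow_left₀ (norm_nonneg _) h1 2).trans h2

lemma energyDensity_nonneg (n p : ℕ) (g : EuclideanSpace ℝ (Fin n) →
      (EuclideanSpace ℝ (Fin n) →L[ℝ] EuclideanSpace ℝ (Fin p)))
    (x : EuclideanSpace ℝ (Fin n)) : 0 ≤ energyDensity n p g x := by
  unfold energyDensity; positivity

set_option linter.unusedVariables false
lemma locInt_pull {n : ℕ} {F : Type*} [NormedAddCommGroup F] [NormedSpace ℝ F]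
    (Ω : Set (EuclideanSpace ℝ (Fin n))) (hΩ : IsOpen Ω)
    (Ψ : EuclideanSpace ℝ (Fin n) ≃ₜ EuclideanSpace ℝ (Fin n))
    (D : EuclideanSpace ℝ (Fin n) → EuclideanSpace ℝ (Fin n) →L[ℝ] EuclideanSpace ℝ (Fin n))
    (J : EuclideanSpace ℝ (Fin n) → ℝ)
    (hD : ∀ x, HasFDerivAt Ψ (D x) x) (hJ : ∀ x, |(D x).det| = J x) (hJc : Continuous J)
    (hΨΩ : Ψ '' Ω = Ω) (f : EuclideanSpace ℝ (Fin n) → F) (hf : LocallyIntegrableOn f Ω) :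
    LocallyIntegrableOn (fun x => f (Ψ.symm x)) Ω := by
  have hsym : Ψ.symm '' Ω = Ω := by
    conv_lhs => rw [← hΨΩ]
    simp [← image_comp]
  rw [locallyIntegrableOn_iff hΩ.isLocallyClosed] at hf ⊢
  intro K hK hKc
  have hK' : K = Ψ '' (Ψ.symm '' K) := by simp [← image_comp]
  rw [hK', integrableOn_image_iff_integrableOn_abs_det_fderiv_smul volume
    (hKc.image Ψ.symm.continuous).measurableSet (fun x _ => (hD x).hasFDerivWithinAt)
    Ψ.injective.injOn]
  simp only [hJ, Homeomorph.symm_apply_apply]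
  refine IntegrableOn.continuousOn_smul ?_ hJc.continuousOn (hKc.image Ψ.symm.continuous)
  apply hf _ _ (hKc.image Ψ.symm.continuous)
  calc _ ⊆ Ψ.symm '' Ω := image_mono hK
    _ = Ω := hsym

lemma locInt_comp {n p : ℕ} (Ω : Set (EuclideanSpace ℝ (Fin n))) (hΩ : IsOpen Ω)
    (g : EuclideanSpace ℝ (Fin n) →
      (EuclideanSpace ℝ (Fin n) →L[ℝ] EuclideanSpace ℝ (Fin p)))
    (L : EuclideanSpace ℝ (Fin n) → EuclideanSpace ℝ (Fin n) →L[ℝ] EuclideanSpace ℝ (Fin n))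
    (hg : LocallyIntegrableOn g Ω) (hL : Continuous L) :
    LocallyIntegrableOn (fun x => (g x).comp (L x)) Ω := by
  rw [locallyIntegrableOn_iff hΩ.isLocallyClosed] at hg ⊢
  intro K hK hKc
  have h1 := hg K hK hKc
  obtain ⟨C, hC⟩ := hKc.exists_bound_of_continuousOn hL.continuousOn
  refine Integrable.mono' (h1.norm.mul_const C) ?_ ?_
  · exact ((ContinuousLinearMap.compL ℝ (EuclideanSpace ℝ (Fin n)) (EuclideanSpace ℝ (Fin n))
      (EuclideanSpace ℝ (Fin p)))).aestronglyMeasurable_comp₂ h1.aestronglyMeasurable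
      hL.aestronglyMeasurable
  · filter_upwards [ae_restrict_mem hKc.measurableSet] with x hx
    refine (ContinuousLinearMap.opNorm_comp_le _ _).trans ?_
    gcongr
    exact hC x hx

lemma int_test {n : ℕ} {Ω : Set (EuclideanSpace ℝ (Fin n))} (hΩ : IsOpen Ω)
    {f ψ : EuclideanSpace ℝ (Fin n) → ℝ} (hf : LocallyIntegrableOn f Ω) (hψ : Continuous ψ)
    (hc : HasCompactSupport ψ) (hs : tsupport ψ ⊆ Ω) :
    IntegrableOn (fun x => f x * ψ x) Ω := by
  have h1 : IntegrableOn (fun x => f x * ψ x) (tsupport ψ) :=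
    (hf.integrableOn_compact_subset hs hc).mul_continuousOn hψ.continuousOn hc
  refine (integrableOn_iff_integrable_of_support_subset ?_).1 h1 |>.integrableOn
  intro x hx
  apply subset_tsupport
  intro h
  simp [h] at hx

lemma locInt_coord {n p : ℕ} {Ω : Set (EuclideanSpace ℝ (Fin n))}
    {u : EuclideanSpace ℝ (Fin n) → EuclideanSpace ℝ (Fin p)}
    (hu : LocallyIntegrableOn u Ω) (j : Fin p) : LocallyIntegrableOn (fun x => u x j) Ω :=
  (EuclideanSpace.proj j : EuclideanSpace ℝ (Fin p) →L[ℝ] ℝ).locallyIntegrableOn_comp hu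

lemma locInt_coord2 {n p : ℕ} {Ω : Set (EuclideanSpace ℝ (Fin n))}
    {g : EuclideanSpace ℝ (Fin n) →
      (EuclideanSpace ℝ (Fin n) →L[ℝ] EuclideanSpace ℝ (Fin p))}
    (hu : LocallyIntegrableOn g Ω) (v : EuclideanSpace ℝ (Fin n)) (j : Fin p) :
    LocallyIntegrableOn (fun x => g x v j) Ω :=
  locInt_coord ((ContinuousLinearMap.apply ℝ (EuclideanSpace ℝ (Fin p)) v).locallyIntegrableOn_comp
    hu) j

lemma pullback {n p : ℕ} (Ω : Set (EuclideanSpace ℝ (Fin n))) (hΩ : IsOpen Ω)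
    (u : EuclideanSpace ℝ (Fin n) → EuclideanSpace ℝ (Fin p))
    (g : EuclideanSpace ℝ (Fin n) →
      (EuclideanSpace ℝ (Fin n) →L[ℝ] EuclideanSpace ℝ (Fin p)))
    (hug : HasWeakGradient n p Ω u g)
    (Ψ : EuclideanSpace ℝ (Fin n) ≃ₜ EuclideanSpace ℝ (Fin n))
    (D L : EuclideanSpace ℝ (Fin n) → EuclideanSpace ℝ (Fin n) →L[ℝ] EuclideanSpace ℝ (Fin n))
    (J : EuclideanSpace ℝ (Fin n) → ℝ) (hΨ : ContDiff ℝ (⊤ : ℕ∞) Ψ)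
    (hD : ∀ x, HasFDerivAt Ψ (D x) x) (hJ : ∀ x, |(D x).det| = J x) (hJc : Continuous J)
    (hLc : Continuous L) (hDL : ∀ x v, D x (L x v) = v)
    (hΨΩ : Ψ '' Ω = Ω) (c : Fin n → Fin n → EuclideanSpace ℝ (Fin n) → ℝ)
    (hc : ∀ i k x, c i k x = J x * (L x (EuclideanSpace.single i 1)) k)
    (hcs : ∀ i k, ContDiff ℝ (⊤ : ℕ∞) (c i k))
    (hdiv : ∀ i x, ∑ k, fderiv ℝ (c i k) x (EuclideanSpace.single k 1) = 0) :
    HasWeakGradient n p Ω (fun x => u (Ψ.symm x))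
      (fun x => (g (Ψ.symm x)).comp (L (Ψ.symm x))) := by
  obtain ⟨h1, h2, h3⟩ := hug
  refine ⟨locInt_pull Ω hΩ Ψ D J hD hJ hJc hΨΩ u h1,
    locInt_pull Ω hΩ Ψ D J hD hJ hJc hΨΩ _ (locInt_comp Ω hΩ g L h2 hLc), ?_⟩
  intro φ hφ hφc hφs i j
  have cov : ∀ f : EuclideanSpace ℝ (Fin n) → ℝ, ∫ x in Ω, f x = ∫ x in Ω, J x * f (Ψ x) := by
    intro f
    conv_lhs => rw [← hΨΩ]
    rw [integral_image_eq_integral_abs_det_fderiv_smul volume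
      hΩ.measurableSet (fun x _ => (hD x).hasFDerivWithinAt) Ψ.injective.injOn]
    simp only [hJ, smul_eq_mul]
  rw [cov, cov (fun x => φ x * _)]
  simp only [Homeomorph.symm_apply_apply]
  have hcomp : HasCompactSupport (fun x => φ (Ψ x)) := hφc.comp_homeomorph Ψ
  have hsub : tsupport (fun x => φ (Ψ x)) ⊆ Ω := by
    have : tsupport (fun x => φ (Ψ x)) ⊆ Ψ ⁻¹' (tsupport φ) := by
      apply closure_minimal _ ((isClosed_tsupport φ).preimage Ψ.continuous)
      intro x hx
      exact subset_tsupport _ hx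
    refine this.trans ?_
    intro x hx
    have : Ψ x ∈ Ψ '' Ω := by rw [hΨΩ]; exact hφs hx
    obtain ⟨z, hz, hzx⟩ := this
    rwa [← Ψ.injective hzx]
  set τ : Fin n → EuclideanSpace ℝ (Fin n) → ℝ := fun k x => φ (Ψ x) * c i k x with hτ
  have hτs : ∀ k, ContDiff ℝ (⊤ : ℕ∞) (τ k) := fun k => (hφ.comp hΨ).mul (hcs i k)
  have hτc : ∀ k, HasCompactSupport (τ k) := fun k => hcomp.mul_right
  have hτsub : ∀ k, tsupport (τ k) ⊆ Ω := fun k => (tsupport_mul_subset_left).trans hsub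
  have key : ∀ x, J x * fderiv ℝ φ (Ψ x) (EuclideanSpace.single i 1) =
      ∑ k, fderiv ℝ (τ k) x (EuclideanSpace.single k 1) := by
    intro x
    have hd : ∀ k, fderiv ℝ (τ k) x (EuclideanSpace.single k 1) =
        φ (Ψ x) * fderiv ℝ (c i k) x (EuclideanSpace.single k 1) +
        fderiv ℝ φ (Ψ x) (D x (c i k x • EuclideanSpace.single k 1)) := by
      intro k
      have e1 : HasFDerivAt (fun x => φ (Ψ x)) ((fderiv ℝ φ (Ψ x)).comp (D x)) x :=
        HasFDerivAt.comp x ((hφ.differentiable (by simp)) (Ψ x)).hasFDerivAt (hD x)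
      have e2 := e1.mul ((hcs i k).differentiable (by simp) x).hasFDerivAt
      rw [show τ k = (fun x => φ (Ψ x)) * c i k from rfl, e2.fderiv]
      simp
    simp_rw [hd, Finset.sum_add_distrib, ← Finset.mul_sum, hdiv, ← map_sum]
    have : ∑ k, c i k x • EuclideanSpace.single k (1:ℝ) =
        J x • L x (EuclideanSpace.single i 1) := by
      simp_rw [hc, mul_smul, ← Finset.smul_sum, sum_single]
    rw [this]
    simp [hDL]
  have hderiv : ∀ k, Continuous fun x => fderiv ℝ (τ k) x (EuclideanSpace.single k 1) :=
    fun k => ((hτs k).continuous_fderiv (by simp)).clm_apply continuous_const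
  calc ∫ x in Ω, J x * (u x j * fderiv ℝ φ (Ψ x) (EuclideanSpace.single i 1))
      = ∫ x in Ω, ∑ k, u x j * fderiv ℝ (τ k) x (EuclideanSpace.single k 1) := by
        congr 1; ext x
        rw [← Finset.mul_sum, ← key]; ring
    _ = ∑ k, ∫ x in Ω, u x j * fderiv ℝ (τ k) x (EuclideanSpace.single k 1) := by
        apply integral_finsetSum
        intro k _
        refine int_test hΩ (locInt_coord h1 j) (hderiv k) ((hτc k).fderiv_apply ℝ _) ?_
        exact (tsupport_fderiv_apply_subset ℝ _).trans (hτsub k)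
    _ = ∑ k, - ∫ x in Ω, τ k x * g x (EuclideanSpace.single k 1) j := by
        congr 1; ext k
        exact h3 (τ k) (hτs k) (hτc k) (hτsub k) k j
    _ = - ∫ x in Ω, ∑ k, τ k x * g x (EuclideanSpace.single k 1) j := by
        rw [Finset.sum_neg_distrib, integral_finsetSum]
        intro k _
        simp_rw [mul_comm (τ k _)]
        exact int_test hΩ (locInt_coord2 h2 _ j) (hτs k).continuous (hτc k) (hτsub k)
    _ = _ := by
        congr 2; ext x
        have : L x (EuclideanSpace.single i 1) =
          ∑ k, (L x (EuclideanSpace.single i 1)) k • EuclideanSpace.single k (1:ℝ) :=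
            (sum_single _).symm
        rw [ContinuousLinearMap.comp_apply, this, map_sum]
        simp only [hτ, hc, map_smul]
        rw [WithLp.ofLp_sum, Finset.sum_apply, Finset.mul_sum, Finset.mul_sum]
        congr 1; ext k
        simp
        ring

set_option linter.unusedVariables false
lemma div_zero_aux {m : ℕ} (y x : EuclideanSpace ℝ (Fin (m+2)))
    (a b : EuclideanSpace ℝ (Fin (m+2)) → ℝ) (γ : ℝ)
    (ha : HasFDerivAt a (b x • innerSL ℝ (x - y)) x)
    (hb : HasFDerivAt b (γ • innerSL ℝ (x - y)) x) (i : Fin (m+2)) :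
    ∑ k, fderiv ℝ (fun x => a x ^ m * ((a x + b x * ‖x - y‖^2) *
        (if i = k then (1:ℝ) else 0) - b x * (x - y) i * (x - y) k)) x
          (EuclideanSpace.single k 1) = 0 := by
  have hs : HasFDerivAt (fun x => ‖x - y‖^2) ((2:ℝ) • innerSL ℝ (x - y)) x := by
    have := ((hasFDerivAt_id x).sub_const y).norm_sq
    refine HasFDerivAt.congr_fderiv this ?_
    ext z
    simp
  have hv : ∀ k, HasFDerivAt (fun x : EuclideanSpace ℝ (Fin (m+2)) => (x - y) k)
      (EuclideanSpace.proj k : EuclideanSpace ℝ (Fin (m+2)) →L[ℝ] ℝ) x := by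
    intro k
    have := (EuclideanSpace.proj k : EuclideanSpace ℝ (Fin (m+2)) →L[ℝ] ℝ).hasFDerivAt.comp x
      ((hasFDerivAt_id x).sub_const y)
    exact this
  set v := x - y with hvdef
  have hk : ∀ k, fderiv ℝ (fun x => a x ^ m * ((a x + b x * ‖x - y‖^2) *
        (if i = k then (1:ℝ) else 0) - b x * (x - y) i * (x - y) k)) x
          (EuclideanSpace.single k 1) =
      m * a x ^ (m-1) * b x * ((a x + b x * ‖v‖^2) * ((if i = k then (1:ℝ) else 0) * v k)
        - b x * v i * (v k) ^2)
      + a x ^ m * ((3 * b x + γ * ‖v‖^2) * ((if i = k then (1:ℝ) else 0) * v k)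
        - γ * v i * (v k)^2 - b x * ((if i = k then (1:ℝ) else 0) * v k) - b x * v i) := by
    intro k
    have e := (ha.pow m).mul (((ha.add (hb.mul hs)).mul_const
      (if i = k then (1:ℝ) else 0)).sub ((hb.mul (hv i)).mul (hv k)))
    have e' := e.fderiv
    have : ∀ A B : EuclideanSpace ℝ (Fin (m+2)) →L[ℝ] ℝ, A = B →
      A (EuclideanSpace.single k 1) = B (EuclideanSpace.single k 1) := fun A B h => by rw [h]
    refine (this _ _ e').trans ?_
    simp only [_root_.add_apply, _root_.sub_apply,
      _root_.smul_apply, innerSL_apply_apply, EuclideanSpace.inner_single_right,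
      smul_eq_mul, Pi.mul_apply,
      Pi.add_apply, Pi.sub_apply, ← hvdef]
    by_cases hik : i = k
    · subst hik; simp; ring
    · simp [hik]; ring
  simp_rw [hk, Finset.sum_add_distrib, ← Finset.mul_sum, Finset.sum_sub_distrib, ← Finset.mul_sum]
  have h1 : ∑ k, v k ^ 2 = ‖v‖^2 := by rw [EuclideanSpace.norm_sq_eq]; simp
  have h2 : ∑ k, (if i = k then (1:ℝ) else 0) * v k = v i := by simp
  simp only [h1, h2, Finset.sum_const, Finset.card_univ, Fintype.card_fin, nsmul_eq_mul]
  push_cast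
  rcases m with _ | m
  · simp; ring
  · simp; ring

lemma locInt_apply_sq {n p : ℕ} (Ω : Set (EuclideanSpace ℝ (Fin n)))
    (hΩ : IsOpen Ω) (y : EuclideanSpace ℝ (Fin n))
    (g : EuclideanSpace ℝ (Fin n) →
      (EuclideanSpace ℝ (Fin n) →L[ℝ] EuclideanSpace ℝ (Fin p)))
    (hg : LocallyIntegrableOn g Ω) (he : LocallyIntegrableOn (energyDensity n p g) Ω) :
    LocallyIntegrableOn (fun x => ‖g x (x - y)‖^2) Ω := by
  have hc : Continuous fun x : EuclideanSpace ℝ (Fin n) => ‖x - y‖^2 := by fun_prop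
  rw [locallyIntegrableOn_iff hΩ.isLocallyClosed] at *
  intro K hK hKc
  refine Integrable.mono' ((he K hK hKc).mul_continuousOn hc.continuousOn hKc) ?_ ?_
  · have := (ContinuousLinearMap.id ℝ (EuclideanSpace ℝ (Fin n) →L[ℝ]
      EuclideanSpace ℝ (Fin p))).aestronglyMeasurable_comp₂
      (hg K hK hKc).aestronglyMeasurable
      (g := fun x => x - y) (continuous_id.sub continuous_const).aestronglyMeasurable
    exact this.norm.pow 2
  · refine Eventually.of_forall fun x => ?_
    rw [Real.norm_of_nonneg (by positivity)]
    exact norm_apply_sq_le n p g x _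

def Pf (m : ℕ) (t e q : ℝ) : ℝ := (1 + t * e)^m * (1 + t * q) * (1 + t * e)⁻¹
def Pd (m : ℕ) (t e q : ℝ) : ℝ :=
  (m * (1 + t * e)^(m-1) * e * (1 + t * q) + (1 + t * e)^m * q) * (1 + t * e)⁻¹ +
    (1 + t * e)^m * (1 + t * q) * (-e * ((1 + t * e)⁻¹)^2)
def Qf (m : ℕ) (t e q k : ℝ) : ℝ :=
  -(1 + t * e)^m * (2 * t * k) * (2 + t * e + t * q) * (1 + t * e)⁻¹ * (1 + t * q)⁻¹
def Qd (m : ℕ) (t e q k : ℝ) : ℝ :=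
  (((-(m * (1 + t * e)^(m-1) * e) * (2 * t * k) + -(1 + t * e)^m * (2 * k)) * (2 + t * e + t * q) +
   -(1 + t * e)^m * (2 * t * k) * (e + q)) * (1 + t * e)⁻¹ +
   -(1 + t * e)^m * (2 * t * k) * (2 + t * e + t * q) * (-e * ((1 + t * e)⁻¹)^2)) * (1 + t * q)⁻¹ +
   -(1 + t * e)^m * (2 * t * k) * (2 + t * e + t * q) * (1 + t * e)⁻¹ *
     (-q * ((1 + t * q)⁻¹)^2)

lemma lin_deriv (e t : ℝ) : HasDerivAt (fun t => 1 + t * e) e t := by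
  simpa using ((hasDerivAt_id t).mul_const e).const_add 1

lemma lin_inv_deriv (e t : ℝ) (h : 1 + t * e ≠ 0) :
    HasDerivAt (fun t => (1 + t * e)⁻¹) (-e * ((1 + t * e)⁻¹)^2) t := by
  refine ((lin_deriv e t).inv h).congr_deriv ?_
  field_simp

lemma Pf_deriv (m : ℕ) (t e q : ℝ) (h : 1 + t * e ≠ 0) :
    HasDerivAt (fun t => Pf m t e q) (Pd m t e q) t := by
  exact (((lin_deriv e t).pow m).mul (lin_deriv q t)).mul (lin_inv_deriv e t h)

lemma Qf_deriv (m : ℕ) (t e q k : ℝ) (h : 1 + t * e ≠ 0) (h' : 1 + t * q ≠ 0) :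
    HasDerivAt (fun t => Qf m t e q k) (Qd m t e q k) t := by
  have h1 : HasDerivAt (fun t : ℝ => 2 * t * k) (2 * k) t := by
    simpa using ((hasDerivAt_id t).const_mul 2).mul_const k
  have h2 : HasDerivAt (fun t : ℝ => 2 + t * e + t * q) (e + q) t := by
    have := (((hasDerivAt_id t).mul_const e).const_add 2).add
      ((hasDerivAt_id t).mul_const q)
    exact this.congr_deriv (by ring)
  exact ((((((lin_deriv e t).pow m).neg.mul h1).mul h2).mul (lin_inv_deriv e t h)).mul
    (lin_inv_deriv q t h'))

lemma lin_pos {C ε t e : ℝ} (hε : ε * C ≤ 1/2) (hC : 0 ≤ C) (ht : |t| ≤ ε) (he : |e| ≤ C) :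
    0 < 1 + t * e := by
  have : |t * e| ≤ 1/2 := by
    rw [abs_mul]
    calc |t| * |e| ≤ ε * C := by gcongr; exact (abs_nonneg t).trans ht
      _ ≤ _ := hε
  have := (abs_le.1 this).1
  linarith

lemma PQ_bound (m : ℕ) (C ε : ℝ) (hC : 0 ≤ C) (hε : ε * C ≤ 1/2) :
    ∃ K, ∀ t e q k : ℝ, |t| ≤ ε → |e| ≤ C → |q| ≤ C → |k| ≤ C →
      |Pd m t e q| ≤ K ∧ |Qd m t e q k| ≤ K := by
  have hcomp : IsCompact (closedBall (0:ℝ) ε ×ˢ closedBall (0:ℝ) C ×ˢ closedBall (0:ℝ) C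
      ×ˢ closedBall (0:ℝ) C) :=
    (isCompact_closedBall _ _).prod ((isCompact_closedBall _ _).prod
      ((isCompact_closedBall _ _).prod (isCompact_closedBall _ _)))
  have ne1 : ∀ z ∈ (closedBall (0:ℝ) ε ×ˢ closedBall (0:ℝ) C ×ˢ closedBall (0:ℝ) C
      ×ˢ closedBall (0:ℝ) C), 1 + z.1 * z.2.1 ≠ 0 := by
    rintro ⟨t, e, q, k⟩ ⟨h1, h2, h3, h4⟩
    simp only [mem_closedBall, dist_zero_right, Real.norm_eq_abs] at *
    exact (lin_pos hε hC h1 h2).ne'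
  have ne2 : ∀ z ∈ (closedBall (0:ℝ) ε ×ˢ closedBall (0:ℝ) C ×ˢ closedBall (0:ℝ) C
      ×ˢ closedBall (0:ℝ) C), 1 + z.1 * z.2.2.1 ≠ 0 := by
    rintro ⟨t, e, q, k⟩ ⟨h1, h2, h3, h4⟩
    simp only [mem_closedBall, dist_zero_right, Real.norm_eq_abs] at *
    exact (lin_pos hε hC h1 h3).ne'
  have i1 : ContinuousOn (fun z : ℝ × ℝ × ℝ × ℝ => (1 + z.1 * z.2.1)⁻¹)
    (closedBall (0:ℝ) ε ×ˢ closedBall (0:ℝ) C ×ˢ closedBall (0:ℝ) C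
      ×ˢ closedBall (0:ℝ) C) := ContinuousOn.inv₀ (by fun_prop) ne1
  have i2 : ContinuousOn (fun z : ℝ × ℝ × ℝ × ℝ => (1 + z.1 * z.2.2.1)⁻¹)
    (closedBall (0:ℝ) ε ×ˢ closedBall (0:ℝ) C ×ˢ closedBall (0:ℝ) C
      ×ˢ closedBall (0:ℝ) C) := ContinuousOn.inv₀ (by fun_prop) ne2
  obtain ⟨K1, hK1⟩ := hcomp.exists_bound_of_continuousOn
    (f := fun z : ℝ × ℝ × ℝ × ℝ => Pd m z.1 z.2.1 z.2.2.1) (by unfold Pd; fun_prop)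
  obtain ⟨K2, hK2⟩ := hcomp.exists_bound_of_continuousOn
    (f := fun z : ℝ × ℝ × ℝ × ℝ => Qd m z.1 z.2.1 z.2.2.1 z.2.2.2) (by unfold Qd; fun_prop)
  refine ⟨max K1 K2, fun t e q k ht he hq hk => ⟨?_, ?_⟩⟩
  · exact (hK1 (t, e, q, k) (by simp [*])).trans (le_max_left _ _)
  · exact (hK2 (t, e, q, k) (by simp [*])).trans (le_max_right _ _)

lemma Pd_zero (m : ℕ) (e q : ℝ) : Pd m 0 e q = (m - 1) * e + q := by
  simp [Pd]; ring
lemma Qd_zero (m : ℕ) (e q k : ℝ) : Qd m 0 e q k = - (4 * k) := by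
  simp [Qd]; ring

lemma rad_deriv {n : ℕ} (y x : EuclideanSpace ℝ (Fin n)) (f : ℝ → ℝ) (hf : Differentiable ℝ f) :
    HasFDerivAt (fun x => f (‖x - y‖^2)) ((2 * deriv f (‖x - y‖^2)) • innerSL ℝ (x - y)) x := by
  have hs : HasFDerivAt (fun x => ‖x - y‖^2) ((2:ℝ) • innerSL ℝ (x - y)) x := by
    have := ((hasFDerivAt_id x).sub_const y).norm_sq
    refine HasFDerivAt.congr_fderiv this ?_
    ext z
    simp
  refine ((hf _).hasDerivAt.comp_hasFDerivAt x hs).congr_fderiv ?_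
  rw [smul_smul, mul_comm]

lemma image_of_eq_outside {X : Type*} (Ψ : X ≃ X) (A S : Set X)
    (h : ∀ x ∉ A, Ψ x = x) (hAS : A ⊆ S) : Ψ '' S = S := by
  have h1 : ∀ x ∈ S, Ψ x ∈ S := by
    intro x hx
    by_contra hc
    have h2 : Ψ (Ψ x) = Ψ x := h _ (fun h' => hc (hAS h'))
    have h3 := Ψ.injective h2
    rw [h3] at hc
    exact hc hx
  apply Subset.antisymm
  · rintro _ ⟨x, hx, rfl⟩; exact h1 x hx
  · intro x hx
    by_cases hA : Ψ.symm x ∈ A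
    · exact ⟨_, hAS hA, by simp⟩
    · have := h _ hA
      rw [Equiv.apply_symm_apply] at this
      exact ⟨x, hx, by rw [Equiv.eq_symm_apply] at this; exact this⟩

lemma variation {m p : ℕ} (Ω : Set (EuclideanSpace ℝ (Fin (m+2)))) (hΩ : IsOpen Ω)
    (u : EuclideanSpace ℝ (Fin (m+2)) → EuclideanSpace ℝ (Fin p))
    (g : EuclideanSpace ℝ (Fin (m+2)) →
      (EuclideanSpace ℝ (Fin (m+2)) →L[ℝ] EuclideanSpace ℝ (Fin p)))
    (hu : IsEnergyMinimizingToSphere (m+2) p Ω u g)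
    (y : EuclideanSpace ℝ (Fin (m+2))) (r ρ : ℝ) (hρ : 0 < ρ) (hr : r < ρ) (hr0 : 0 < r)
    (hB : closedBall y ρ ⊆ Ω) (η : ℝ → ℝ) (hη : ContDiff ℝ (⊤ : ℕ∞) η)
    (hη0 : ∀ s, r ^ 2 ≤ s → η s = 0) (t : ℝ)
    (Ψ : EuclideanSpace ℝ (Fin (m+2)) ≃ₜ EuclideanSpace ℝ (Fin (m+2)))
    (hΨ : ∀ x, Ψ x = x + (t * η (‖x - y‖^2)) • (x - y))
    (ha0 : ∀ x, 0 < 1 + t * η (‖x - y‖^2))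
    (hb0 : ∀ x, 0 < 1 + t * (η (‖x - y‖^2) + 2 * deriv η (‖x - y‖^2) * ‖x - y‖^2)) :
    ∫ x in ball y ρ, energyDensity (m+2) p g x ≤ ∫ x in ball y ρ,
      (Pf m t (η (‖x - y‖^2)) (η (‖x - y‖^2) + 2 * deriv η (‖x - y‖^2) * ‖x - y‖^2) *
        energyDensity (m+2) p g x +
      Qf m t (η (‖x - y‖^2)) (η (‖x - y‖^2) + 2 * deriv η (‖x - y‖^2) * ‖x - y‖^2)
        (deriv η (‖x - y‖^2)) * ‖g x (x - y)‖^2) := by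
  obtain ⟨hug, hE, hsph, hmin⟩ := hu
  have hη' : ContDiff ℝ (⊤ : ℕ∞) (deriv η) := (contDiff_infty_iff_deriv.1 hη).2
  set a : EuclideanSpace ℝ (Fin (m+2)) → ℝ := fun x => 1 + t * η (‖x - y‖^2) with ha
  set b : EuclideanSpace ℝ (Fin (m+2)) → ℝ := fun x => 2 * t * deriv η (‖x - y‖^2) with hb
  have hab : ∀ x, a x + b x * ‖x - y‖^2 =
      1 + t * (η (‖x - y‖^2) + 2 * deriv η (‖x - y‖^2) * ‖x - y‖^2) := by
    intro x; simp only [ha, hb]; ring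
  have hab0 : ∀ x, 0 < a x + b x * ‖x - y‖^2 := fun x => by rw [hab]; exact hb0 x
  have hsm : ContDiff ℝ (⊤ : ℕ∞) (fun x : EuclideanSpace ℝ (Fin (m+2)) => ‖x - y‖^2) :=
    (contDiff_id.sub contDiff_const).norm_sq ℝ
  have has : ContDiff ℝ (⊤ : ℕ∞) a := contDiff_const.add (contDiff_const.mul (hη.comp hsm))
  have hbs : ContDiff ℝ (⊤ : ℕ∞) b := contDiff_const.mul (hη'.comp hsm)
  have had : ∀ x, HasFDerivAt a (b x • innerSL ℝ (x - y)) x := by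
    intro x
    refine (((rad_deriv y x η (hη.differentiable (by simp))).const_mul t).const_add 1).congr_fderiv
      ?_
    rw [smul_smul]; congr 1; simp only [hb]; ring
  have hbd : ∀ x, HasFDerivAt b ((2 * t * (2 * deriv (deriv η) (‖x - y‖^2))) • innerSL ℝ (x - y))
      x := by
    intro x
    refine ((rad_deriv y x _ (hη'.differentiable (by simp))).const_mul (2 * t)).congr_fderiv
      ?_
    rw [smul_smul]
  have hac := has.continuous
  have hbc := hbs.continuous
  set D : EuclideanSpace ℝ (Fin (m+2)) → _ := fun x => rk1 (a x) (b x) (x - y) with hDdef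
  set L : EuclideanSpace ℝ (Fin (m+2)) → _ := fun x =>
    rk1 (a x)⁻¹ (-b x / (a x * (a x + b x * ‖x - y‖^2))) (x - y) with hLdef
  set J : EuclideanSpace ℝ (Fin (m+2)) → ℝ := fun x => a x ^ (m+1) * (a x + b x * ‖x - y‖^2)
    with hJdef
  have hJc : Continuous J := by fun_prop
  have hJdet : ∀ x, |(D x).det| = J x := by
    intro x
    rw [hDdef]
    simp only
    rw [rk1_det _ _ (ha0 x).ne', abs_of_pos]
    have := ha0 x
    have := hab0 x
    positivity
  have hcoef1 : Continuous fun x => (a x)⁻¹ := hac.inv₀ (fun x => (ha0 x).ne')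
  have hcoef2 : Continuous fun x => -b x / (a x * (a x + b x * ‖x - y‖^2)) := by
    refine Continuous.div (by fun_prop) (by fun_prop) ?_
    intro x
    exact (mul_pos (ha0 x) (hab0 x)).ne'
  have hLc : Continuous L := by
    simp only [hLdef, rk1]
    refine (hcoef1.smul continuous_const).add (hcoef2.smul ?_)
    have h1 : Continuous fun x : EuclideanSpace ℝ (Fin (m+2)) => x - y := by fun_prop
    have h2 : Continuous fun x : EuclideanSpace ℝ (Fin (m+2)) => innerSL ℝ (x - y) :=
      (innerSL ℝ).continuous.comp h1
    exact ((ContinuousLinearMap.smulRightL ℝ (EuclideanSpace ℝ (Fin (m+2)))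
      (EuclideanSpace ℝ (Fin (m+2)))).continuous.comp h2).clm_apply h1
  have hDL : ∀ x v, D x (L x v) = v := fun x v => rk1_inv _ _ _ _ (ha0 x).ne' (hab0 x).ne'
  have hΨfun : (Ψ : EuclideanSpace ℝ (Fin (m+2)) → _) =
      fun x => x + (t * η (‖x - y‖^2)) • (x - y) := funext hΨ
  have hΨs : ContDiff ℝ (⊤ : ℕ∞) Ψ := by
    rw [hΨfun]
    exact contDiff_id.add ((contDiff_const.mul (hη.comp hsm)).smul
      (contDiff_id.sub contDiff_const))
  have hΨd : ∀ x, HasFDerivAt Ψ (D x) x := by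
    intro x
    rw [hΨfun]
    have h1 := (rad_deriv y x η (hη.differentiable (by simp))).const_mul t
    have h2 := (hasFDerivAt_id x).add (h1.smul ((hasFDerivAt_id x).sub_const y))
    refine HasFDerivAt.congr_fderiv h2 ?_
    apply ContinuousLinearMap.ext
    intro z
    simp only [hDdef, rk1_apply, ha, hb]
    simp only [_root_.add_apply, _root_.smul_apply, ContinuousLinearMap.smulRight_apply,
      innerSL_apply_apply, ContinuousLinearMap.id_apply, id, smul_eq_mul]
    rw [add_smul, one_smul, add_assoc]
    congr 3
    ring
  have hout : ∀ x ∉ ball y r, Ψ x = x := by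
    intro x hx
    rw [hΨ, hη0, mul_zero, zero_smul, add_zero]
    rw [mem_ball, dist_eq_norm, not_lt] at hx
    gcongr
  have hrρ : ball y r ⊆ ball y ρ := ball_subset_ball hr.le
  have hρΩ : ball y ρ ⊆ Ω := ball_subset_closedBall.trans hB
  have hΨΩ : Ψ '' Ω = Ω := image_of_eq_outside Ψ.toEquiv _ _ hout (hrρ.trans hρΩ)
  have hΨB : Ψ '' (ball y ρ) = ball y ρ := image_of_eq_outside Ψ.toEquiv _ _ hout hrρ
  have hwg := pullback Ω hΩ u g hug Ψ D L J hΨs hΨd hJdet hJc hLc hDL hΨΩ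
    (fun i k x => a x ^ m * ((a x + b x * ‖x - y‖^2) *
        (if i = k then (1:ℝ) else 0) - b x * (x - y) i * (x - y) k))
    (by
      intro i k x
      simp only [hJdef, hLdef, rk1_apply]
      have h1 := (ha0 x).ne'
      have h2 := (hab0 x).ne'
      simp only [PiLp.add_apply, PiLp.smul_apply, smul_eq_mul,
        EuclideanSpace.inner_single_right, PiLp.single_apply]
      simp only [eq_comm (a := k)]
      generalize (if i = k then (1:ℝ) else 0) = δ
      change a x ≠ 0 at h1
      simp only [conj_trivial, one_mul]
      field_simp
      ring)
    (by
      intro i k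
      have hk : ∀ k, ContDiff ℝ (⊤ : ℕ∞) fun x : EuclideanSpace ℝ (Fin (m+2)) => (x - y) k :=
        fun k => (EuclideanSpace.proj k : EuclideanSpace ℝ (Fin (m+2)) →L[ℝ] ℝ).contDiff.comp
          (contDiff_id.sub contDiff_const)
      exact (has.pow m).mul (((has.add (hbs.mul hsm)).mul contDiff_const).sub
        ((hbs.mul (hk i)).mul (hk k))))
    (fun i x => div_zero_aux y x a b _ (had x) (hbd x) i)
  have hen : ∀ x, energyDensity (m+2) p (fun x => (g x).comp (L x)) x =
      ((a x)⁻¹)^2 * energyDensity (m+2) p g x + (2 * (a x)⁻¹ *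
        (-b x / (a x * (a x + b x * ‖x - y‖^2))) + (-b x / (a x * (a x + b x * ‖x - y‖^2)))^2
          * ‖x - y‖^2) * ‖g x (x - y)‖^2 := by
    intro x
    exact energyDensity_rk1 (m+2) p g _ x x (x - y) _ _ rfl
  have hli : LocallyIntegrableOn (energyDensity (m+2) p (fun x => (g x).comp (L x))) Ω := by
    rw [show energyDensity (m+2) p (fun x => (g x).comp (L x)) = _ from funext hen]
    have h1 := locInt_apply_sq Ω hΩ y g hug.2.1 hE
    refine LocallyIntegrableOn.add
      (hE.continuousOn_mul (Continuous.continuousOn ?_) hΩ.isLocallyClosed)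
      (h1.continuousOn_mul (Continuous.continuousOn ?_) hΩ.isLocallyClosed)
    · fun_prop
    · fun_prop
  have hmain := hmin y ρ hρ hB _ _ hwg
    (locInt_pull Ω hΩ Ψ D J hΨd hJdet hJc hΨΩ _ hli)
    (by
      rw [ae_restrict_iff' hΩ.measurableSet] at hsph ⊢
      rw [ae_iff] at hsph ⊢
      refine measure_mono_null ?_
        (addHaar_image_eq_zero_of_differentiableOn_of_addHaar_eq_zero volume
          (hΨs.differentiable (by simp)).differentiableOn hsph)
      intro x hx
      simp only [mem_ofPred_eq, Classical.not_imp] at hx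
      refine ⟨Ψ.symm x, ?_, by simp⟩
      simp only [mem_ofPred_eq, Classical.not_imp]
      refine ⟨?_, hx.2⟩
      have : x ∈ Ψ '' Ω := by rw [hΨΩ]; exact hx.1
      obtain ⟨z, hz, rfl⟩ := this
      simpa using hz)
    ⟨r, hr, by
      filter_upwards [ae_restrict_mem (hΩ.measurableSet.diff measurableSet_ball)] with x hx
      congr 1
      rw [Homeomorph.symm_apply_eq]
      exact (hout x hx.2).symm⟩
  refine hmain.trans (le_of_eq ?_)
  conv_lhs => rw [← hΨB]
  rw [integral_image_eq_integral_abs_det_fderiv_smul volume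
      measurableSet_ball (fun x _ => (hΨd x).hasFDerivWithinAt) Ψ.injective.injOn]
  congr 1
  ext x
  have e1 : energyDensity (m+2) p (fun x => (g (Ψ.symm x)).comp (L (Ψ.symm x))) (Ψ x)
    = energyDensity (m+2) p (fun x => (g x).comp (L x)) x := by
    simp [energyDensity]
  rw [e1, hen, hJdet, smul_eq_mul]
  have h1 : a x ≠ 0 := (ha0 x).ne'
  have h2 := (hab0 x).ne'
  have h3 : Pf m t (η (‖x - y‖^2)) (η (‖x - y‖^2) + 2 * deriv η (‖x - y‖^2) * ‖x - y‖^2)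
      = a x ^ m * (a x + b x * ‖x - y‖^2) * (a x)⁻¹ := by
    rw [hab]; rfl
  have h4 : Qf m t (η (‖x - y‖^2)) (η (‖x - y‖^2) + 2 * deriv η (‖x - y‖^2) * ‖x - y‖^2)
      (deriv η (‖x - y‖^2)) = - a x ^ m * b x * (2 * a x + b x * ‖x - y‖^2) * (a x)⁻¹ *
        (a x + b x * ‖x - y‖^2)⁻¹ := by
    rw [hab]
    simp only [Qf, ha, hb]
    ring
  rw [h3, h4]
  simp only [hJdef]
  generalize energyDensity (m+2) p g x = e
  generalize ‖g x (x - y)‖ = w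
  generalize hA : a x = A at *
  generalize hBB : b x = B at *
  generalize ‖x - y‖ = s at *
  field_simp
  ring

lemma exists_homeo {n : ℕ} [Nontrivial (EuclideanSpace ℝ (Fin n))]
    (ζ : EuclideanSpace ℝ (Fin n) → EuclideanSpace ℝ (Fin n)) (K : NNReal)
    (hζ : LipschitzWith K ζ) (t : ℝ) (ht : |t| * K < 1) :
    ∃ Ψ : EuclideanSpace ℝ (Fin n) ≃ₜ EuclideanSpace ℝ (Fin n), ∀ x, Ψ x = x + t • ζ x := by
  have h : ApproximatesLinearOn (fun x => x + t • ζ x)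
      ((ContinuousLinearEquiv.refl ℝ (EuclideanSpace ℝ (Fin n)) :
        EuclideanSpace ℝ (Fin n) ≃L[ℝ] EuclideanSpace ℝ (Fin n)) :
        EuclideanSpace ℝ (Fin n) →L[ℝ] EuclideanSpace ℝ (Fin n)) univ (‖t‖₊ * K) := by
    intro x _ z _
    have : x + t • ζ x - (z + t • ζ z) - (x - z) = t • (ζ x - ζ z) := by
      rw [smul_sub]; abel
    simp only [ContinuousLinearEquiv.coe_refl, ContinuousLinearMap.id_apply]
    rw [this, norm_smul, NNReal.coe_mul, mul_assoc, coe_nnnorm]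
    gcongr
    have := hζ.dist_le_mul x z
    rwa [dist_eq_norm, dist_eq_norm] at this
  refine ⟨h.toHomeomorph _ (Or.inr ?_), fun x => rfl⟩
  have h1 : ‖(((ContinuousLinearEquiv.refl ℝ (EuclideanSpace ℝ (Fin n))).symm :
      EuclideanSpace ℝ (Fin n) ≃L[ℝ] EuclideanSpace ℝ (Fin n)) :
        EuclideanSpace ℝ (Fin n) →L[ℝ] EuclideanSpace ℝ (Fin n))‖₊ = 1 := by
    ext
    simp
  rw [h1, inv_one, ← NNReal.coe_lt_coe]
  simpa using ht

lemma stationary {m p : ℕ} (Ω : Set (EuclideanSpace ℝ (Fin (m+2)))) (hΩ : IsOpen Ω)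
    (u : EuclideanSpace ℝ (Fin (m+2)) → EuclideanSpace ℝ (Fin p))
    (g : EuclideanSpace ℝ (Fin (m+2)) →
      (EuclideanSpace ℝ (Fin (m+2)) →L[ℝ] EuclideanSpace ℝ (Fin p)))
    (hu : IsEnergyMinimizingToSphere (m+2) p Ω u g)
    (y : EuclideanSpace ℝ (Fin (m+2))) (r ρ : ℝ) (hρ : 0 < ρ) (hr : r < ρ) (hr0 : 0 < r)
    (hB : closedBall y ρ ⊆ Ω) (η : ℝ → ℝ) (hη : ContDiff ℝ (⊤ : ℕ∞) η)
    (hη0 : ∀ s, r ^ 2 ≤ s → η s = 0) :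
    ∫ x in ball y ρ, ((m * η (‖x - y‖^2) + 2 * deriv η (‖x - y‖^2) * ‖x - y‖^2) *
      energyDensity (m+2) p g x - 4 * deriv η (‖x - y‖^2) * ‖g x (x - y)‖^2) = 0 := by
  have hη' : ContDiff ℝ (⊤ : ℕ∞) (deriv η) := (contDiff_infty_iff_deriv.1 hη).2
  have hsm : ContDiff ℝ (⊤ : ℕ∞) (fun x : EuclideanSpace ℝ (Fin (m+2)) => ‖x - y‖^2) :=
    (contDiff_id.sub contDiff_const).norm_sq ℝ
  have hηd0 : ∀ s, r^2 < s → deriv η s = 0 := by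
    intro s hs
    have : η =ᶠ[nhds s] fun _ => 0 := by
      filter_upwards [lt_mem_nhds hs] with z hz using hη0 z hz.le
    rw [this.deriv_eq]; simp
  have hout : ∀ x ∉ closedBall y r, r^2 < ‖x - y‖^2 := by
    intro x hx
    rw [mem_closedBall, dist_eq_norm, not_le] at hx
    gcongr
  have hη1c : Continuous fun x : EuclideanSpace ℝ (Fin (m+2)) => η (‖x - y‖^2) :=
    hη.continuous.comp hsm.continuous
  have hη2c : Continuous fun x : EuclideanSpace ℝ (Fin (m+2)) => deriv η (‖x - y‖^2) :=
    hη'.continuous.comp hsm.continuous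
  have hη3c : Continuous fun x : EuclideanSpace ℝ (Fin (m+2)) =>
    (η (‖x - y‖^2) + 2 * deriv η (‖x - y‖^2) * ‖x - y‖^2) := by fun_prop
  have hs1 : HasCompactSupport fun x : EuclideanSpace ℝ (Fin (m+2)) => η (‖x - y‖^2) :=
    HasCompactSupport.intro (isCompact_closedBall y r) (fun x hx => hη0 _ (hout x hx).le)
  have hs2 : HasCompactSupport fun x : EuclideanSpace ℝ (Fin (m+2)) => deriv η (‖x - y‖^2) :=
    HasCompactSupport.intro (isCompact_closedBall y r) (fun x hx => hηd0 _ (hout x hx))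
  have hs3 : HasCompactSupport fun x : EuclideanSpace ℝ (Fin (m+2)) =>
      (η (‖x - y‖^2) + 2 * deriv η (‖x - y‖^2) * ‖x - y‖^2) :=
    HasCompactSupport.intro (isCompact_closedBall y r) (fun x hx => by
      rw [hηd0 _ (hout x hx), hη0 _ (hout x hx).le]; simp)
  obtain ⟨C1, hC1⟩ := hs1.exists_bound_of_continuous hη1c
  obtain ⟨C2, hC2⟩ := hs2.exists_bound_of_continuous hη2c
  obtain ⟨C3, hC3⟩ := hs3.exists_bound_of_continuous hη3c
  obtain ⟨C, hC0, hC1, hC2, hC3⟩ : ∃ C, 0 ≤ C ∧ (∀ x : EuclideanSpace ℝ (Fin (m+2)),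
      |η (‖x - y‖^2)| ≤ C) ∧ (∀ x : EuclideanSpace ℝ (Fin (m+2)), |deriv η (‖x - y‖^2)| ≤ C) ∧
      (∀ x : EuclideanSpace ℝ (Fin (m+2)),
        |η (‖x - y‖^2) + 2 * deriv η (‖x - y‖^2) * ‖x - y‖^2| ≤ C) := by
    refine ⟨max (max C1 C2) C3, ?_, ?_, ?_, ?_⟩
    · exact (norm_nonneg _).trans ((hC3 0).trans (le_max_right _ _))
    · exact fun x => (hC1 x).trans ((le_max_left _ _).trans (le_max_left _ _))
    · exact fun x => (hC2 x).trans ((le_max_right _ _).trans (le_max_left _ _))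
    · exact fun x => (hC3 x).trans (le_max_right _ _)
  obtain ⟨K, hK⟩ : ∃ K, LipschitzWith K
      (fun x : EuclideanSpace ℝ (Fin (m+2)) => η (‖x - y‖^2) • (x - y)) := by
    refine ContDiff.lipschitzWith_of_hasCompactSupport (𝕂 := ℝ) (n := (⊤ : ℕ∞)) ?_ ?_ (by simp)
    · exact hs1.smul_right
    · exact (hη.comp hsm).smul (contDiff_id.sub contDiff_const)
  obtain ⟨ε, hε0, hεC, hεK⟩ : ∃ ε : ℝ, 0 < ε ∧ ε * C ≤ 1/2 ∧ ε * K < 1 := by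
    have hK0 : (0:ℝ) ≤ K := K.2
    refine ⟨1 / (2 * (C + K + 1)), by positivity, ?_, ?_⟩
    · rw [div_mul_eq_mul_div, div_le_div_iff₀ (by positivity) (by norm_num)]; linarith
    · rw [div_mul_eq_mul_div, div_lt_one (by positivity)]; linarith
  obtain ⟨M, hM⟩ := PQ_bound m C ε hC0 hεC
  set e := energyDensity (m+2) p g with he
  set w : EuclideanSpace ℝ (Fin (m+2)) → ℝ := fun x => ‖g x (x - y)‖^2 with hw
  have heI : IntegrableOn e (ball y ρ) :=
    (hu.2.1.integrableOn_compact_subset hB (isCompact_closedBall y ρ)).mono_set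
      ball_subset_closedBall
  have hwI : IntegrableOn w (ball y ρ) :=
    ((locInt_apply_sq Ω hΩ y g hu.1.2.1 hu.2.1).integrableOn_compact_subset hB
      (isCompact_closedBall y ρ)).mono_set ball_subset_closedBall
  set F : ℝ → EuclideanSpace ℝ (Fin (m+2)) → ℝ := fun t x =>
      (Pf m t (η (‖x - y‖^2)) (η (‖x - y‖^2) + 2 * deriv η (‖x - y‖^2) * ‖x - y‖^2) * e x +
      Qf m t (η (‖x - y‖^2)) (η (‖x - y‖^2) + 2 * deriv η (‖x - y‖^2) * ‖x - y‖^2)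
        (deriv η (‖x - y‖^2)) * w x) with hF
  set F' : ℝ → EuclideanSpace ℝ (Fin (m+2)) → ℝ := fun t x =>
      (Pd m t (η (‖x - y‖^2)) (η (‖x - y‖^2) + 2 * deriv η (‖x - y‖^2) * ‖x - y‖^2) * e x +
      Qd m t (η (‖x - y‖^2)) (η (‖x - y‖^2) + 2 * deriv η (‖x - y‖^2) * ‖x - y‖^2)
        (deriv η (‖x - y‖^2)) * w x) with hF'
  have hF0 : F 0 = e := by
    ext x; simp [hF, Pf, Qf]
  have hF'0 : ∀ x, F' 0 x = ((m * η (‖x - y‖^2) + 2 * deriv η (‖x - y‖^2) * ‖x - y‖^2) *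
      e x - 4 * deriv η (‖x - y‖^2) * w x) := by
    intro x
    simp only [hF', Pd_zero, Qd_zero]; ring
  have hder := hasDerivAt_integral_of_dominated_loc_of_deriv_le (𝕜 := ℝ) (x₀ := 0)
    (μ := volume.restrict (ball y ρ)) (F := F) (F' := F') (s := ball 0 ε)
    (bound := fun x => M * e x + M * w x)
    (ball_mem_nhds _ hε0)
    (by
      filter_upwards [ball_mem_nhds _ hε0] with t ht
      have ht' : |t| ≤ ε := by simpa using (mem_ball_zero_iff.1 ht).le
      have i1 : Continuous fun x : EuclideanSpace ℝ (Fin (m+2)) => (1 + t * η (‖x - y‖^2))⁻¹ :=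
        Continuous.inv₀ (by fun_prop) (fun x => (lin_pos hεC hC0 ht' (hC1 x)).ne')
      have i2 : Continuous fun x : EuclideanSpace ℝ (Fin (m+2)) =>
          (1 + t * (η (‖x - y‖^2) + 2 * deriv η (‖x - y‖^2) * ‖x - y‖^2))⁻¹ :=
        Continuous.inv₀ (by fun_prop) (fun x => (lin_pos hεC hC0 ht' (hC3 x)).ne')
      refine AEStronglyMeasurable.add (AEStronglyMeasurable.mul ?_ heI.aestronglyMeasurable)
        (AEStronglyMeasurable.mul ?_ hwI.aestronglyMeasurable)
      · refine Continuous.aestronglyMeasurable ?_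
        unfold Pf; fun_prop
      · refine Continuous.aestronglyMeasurable ?_
        unfold Qf; fun_prop)
    (by rw [hF0]; exact heI)
    (by
      rw [funext hF'0]
      refine AEStronglyMeasurable.sub (AEStronglyMeasurable.mul ?_ heI.aestronglyMeasurable)
        (AEStronglyMeasurable.mul ?_ hwI.aestronglyMeasurable)
      · refine Continuous.aestronglyMeasurable ?_
        fun_prop
      · refine Continuous.aestronglyMeasurable ?_
        fun_prop)
    (by
      refine Eventually.of_forall fun x t ht => ?_
      have ht' : |t| ≤ ε := by simpa using (mem_ball_zero_iff.1 ht).le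
      obtain ⟨b1, b2⟩ := hM t _ _ _ ht' (hC1 x) (hC3 x) (hC2 x)
      have e0 : 0 ≤ e x := energyDensity_nonneg _ _ _ _
      have w0 : 0 ≤ w x := by positivity
      refine (norm_add_le _ _).trans ?_
      rw [norm_mul, norm_mul, Real.norm_of_nonneg e0, Real.norm_of_nonneg w0]
      gcongr
      · exact b1
      · exact b2)
    ((heI.const_mul M).add (hwI.const_mul M))
    (by
      refine Eventually.of_forall fun x t ht => ?_
      have ht' : |t| ≤ ε := by simpa using (mem_ball_zero_iff.1 ht).le
      have n1 := (lin_pos hεC hC0 ht' (hC1 x)).ne'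
      have n2 := (lin_pos hεC hC0 ht' (hC3 x)).ne'
      exact ((Pf_deriv m t _ _ n1).mul_const _).add ((Qf_deriv m t _ _ _ n1 n2).mul_const _))
  have hmin : IsLocalMin (fun t => ∫ x in ball y ρ, F t x) 0 := by
    filter_upwards [ball_mem_nhds (0:ℝ) hε0] with t ht
    have ht' : |t| ≤ ε := by simpa using (mem_ball_zero_iff.1 ht).le
    obtain ⟨Ψ, hΨ⟩ := exists_homeo _ K hK t (lt_of_le_of_lt (by gcongr) hεK)
    have := variation Ω hΩ u g hu y r ρ hρ hr hr0 hB η hη hη0 t Ψ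
      (fun x => by rw [hΨ, smul_smul])
      (fun x => lin_pos hεC hC0 ht' (hC1 x)) (fun x => lin_pos hεC hC0 ht' (hC3 x))
    rw [hF0]
    exact this
  have := hmin.hasDerivAt_eq_zero hder.2
  rw [← this]
  congr 1
  ext x
  exact (hF'0 x).symm

def Aw (m : ℕ) (s : ℝ) : ℝ := (1/2) * s ^ (-((m:ℝ)+2)/2)

def thk (m : ℕ) (σ ρ : ℝ) (k : ℕ) (s : ℝ) : ℝ :=
  Aw m s * (Real.smoothTransition (k * (s - σ^2)) * Real.smoothTransition (k * (ρ^2 - s)))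

def th (m : ℕ) (σ ρ : ℝ) (s : ℝ) : ℝ := (Ioo (σ^2) (ρ^2)).indicator (Aw m) s

def etk (m : ℕ) (σ ρ : ℝ) (k : ℕ) (s : ℝ) : ℝ := ∫ t in (ρ^2)..s, thk m σ ρ k t

lemma Aw_nonneg (m : ℕ) {s : ℝ} (hs : 0 ≤ s) : 0 ≤ Aw m s := by unfold Aw; positivity

lemma Aw_anti (m : ℕ) {s t : ℝ} (hs : 0 < s) (hst : s ≤ t) : Aw m t ≤ Aw m s := by
  unfold Aw
  have := Real.rpow_le_rpow_of_nonpos (z := -((m:ℝ)+2)/2) hs hst (by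
    have : (0:ℝ) ≤ m := by positivity
    linarith)
  linarith

lemma thk_left (m : ℕ) (σ ρ : ℝ) (k : ℕ) (s : ℝ) (h : s ≤ σ^2) : thk m σ ρ k s = 0 := by
  unfold thk
  rw [Real.smoothTransition.zero_of_nonpos]
  · simp
  · exact mul_nonpos_of_nonneg_of_nonpos (by positivity) (by linarith)

lemma thk_right (m : ℕ) (σ ρ : ℝ) (k : ℕ) (s : ℝ) (h : ρ^2 ≤ s) : thk m σ ρ k s = 0 := by
  unfold thk
  rw [Real.smoothTransition.zero_of_nonpos (x := k * (ρ^2 - s))]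
  · simp
  · exact mul_nonpos_of_nonneg_of_nonpos (by positivity) (by linarith)

lemma thk_bound (m : ℕ) (σ ρ : ℝ) (hσ : 0 < σ) (k : ℕ) (s : ℝ) :
    |thk m σ ρ k s| ≤ Aw m (σ^2) := by
  rcases le_or_gt s (σ^2) with h | h
  · rw [thk_left m σ ρ k s h, abs_zero]; exact Aw_nonneg m (by positivity)
  · have h0 : 0 < s := lt_trans (by positivity) h
    have h1 := Real.smoothTransition.nonneg (k * (s - σ^2))
    have h2 := Real.smoothTransition.nonneg (k * (ρ^2 - s))
    have h3 := Real.smoothTransition.le_one (k * (s - σ^2))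
    have h4 := Real.smoothTransition.le_one (k * (ρ^2 - s))
    have h5 := Aw_nonneg m h0.le
    unfold thk
    rw [abs_of_nonneg (by positivity)]
    calc _ ≤ Aw m s * 1 := by gcongr; exact mul_le_one₀ h3 h2 h4
      _ ≤ _ := by rw [mul_one]; exact Aw_anti m (by positivity) h.le

lemma thk_smooth (m : ℕ) (σ ρ : ℝ) (hσ : 0 < σ) (k : ℕ) :
    ContDiff ℝ (⊤ : ℕ∞) (thk m σ ρ k) := by
  rw [contDiff_iff_contDiffAt]
  intro s
  rcases lt_or_ge s (σ^2) with h | h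
  · have : thk m σ ρ k =ᶠ[nhds s] fun _ => 0 := by
      filter_upwards [gt_mem_nhds h] with z hz using thk_left m σ ρ k z hz.le
    exact contDiffAt_const.congr_of_eventuallyEq this
  · have h0 : s ≠ 0 := (lt_of_lt_of_le (by positivity) h).ne'
    unfold thk Aw
    refine ContDiffAt.mul (contDiffAt_const.mul (contDiffAt_id.rpow_const_of_ne h0))
      (ContDiffAt.mul ?_ ?_)
    · exact (Real.smoothTransition.contDiff.comp
        (contDiff_const.mul (contDiff_id.sub contDiff_const))).contDiffAt
    · exact (Real.smoothTransition.contDiff.comp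
        (contDiff_const.mul (contDiff_const.sub contDiff_id))).contDiffAt

lemma thk_tendsto (m : ℕ) (σ ρ : ℝ) (s : ℝ) :
    Tendsto (fun k => thk m σ ρ k s) atTop (nhds (th m σ ρ s)) := by
  unfold th
  by_cases hs : s ∈ Ioo (σ^2) (ρ^2)
  · rw [indicator_of_mem hs]
    apply tendsto_const_nhds.congr'
    have key : ∀ c : ℝ, 0 < c → ∀ᶠ k : ℕ in atTop, Real.smoothTransition (k * c) = 1 := by
      intro c hc
      filter_upwards [(tendsto_natCast_atTop_atTop (R := ℝ)).eventually_ge_atTop (1/c)] with k hk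
      apply Real.smoothTransition.one_of_one_le
      rwa [div_le_iff₀ hc] at hk
    filter_upwards [key (s - σ^2) (by linarith [hs.1]), key (ρ^2 - s) (by linarith [hs.2])]
      with k h1 h2
    simp [thk, h1, h2]
  · rw [indicator_of_notMem hs]
    apply tendsto_const_nhds.congr
    intro k
    rcases le_or_gt s (σ^2) with h | h
    · exact (thk_left m σ ρ k s h).symm
    · exact (thk_right m σ ρ k s (not_lt.1 fun h' => hs ⟨h, h'⟩)).symm

lemma etk_deriv (m : ℕ) (σ ρ : ℝ) (hσ : 0 < σ) (k : ℕ) (s : ℝ) :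
    HasDerivAt (etk m σ ρ k) (thk m σ ρ k s) s := by
  have hc := (thk_smooth m σ ρ hσ k).continuous
  exact intervalIntegral.integral_hasDerivAt_right (hc.intervalIntegrable _ _)
    hc.stronglyMeasurable.stronglyMeasurableAtFilter hc.continuousAt

lemma etk_smooth (m : ℕ) (σ ρ : ℝ) (hσ : 0 < σ) (k : ℕ) :
    ContDiff ℝ (⊤ : ℕ∞) (etk m σ ρ k) := by
  refine contDiff_infty_iff_deriv.2 ⟨fun s => (etk_deriv m σ ρ hσ k s).differentiableAt, ?_⟩
  rw [show deriv (etk m σ ρ k) = thk m σ ρ k from funext fun s => (etk_deriv m σ ρ hσ k s).deriv]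
  exact thk_smooth m σ ρ hσ k

lemma etk_right (m : ℕ) (σ ρ : ℝ) (k : ℕ) (s : ℝ) (h : ρ^2 ≤ s) : etk m σ ρ k s = 0 := by
  unfold etk
  rw [intervalIntegral.integral_congr (g := fun _ => 0)]
  · simp
  · intro t ht
    rw [uIcc_of_le h] at ht
    exact thk_right m σ ρ k t ht.1

lemma etk_bound (m : ℕ) (σ ρ : ℝ) (hσ : 0 < σ) (k : ℕ) (s : ℝ) :
    |etk m σ ρ k s| ≤ Aw m (σ^2) * |s - ρ^2| := by
  have h := intervalIntegral.norm_integral_le_of_norm_le_const (f := thk m σ ρ k)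
    (a := ρ^2) (b := s) (C := Aw m (σ^2))
    (fun t _ => by rw [Real.norm_eq_abs]; exact thk_bound m σ ρ hσ k t)
  rw [Real.norm_eq_abs] at h
  exact h

lemma etk_tendsto (m : ℕ) (σ ρ : ℝ) (hσ : 0 < σ) (s : ℝ) :
    Tendsto (fun k => etk m σ ρ k s) atTop (nhds (∫ t in (ρ^2)..s, th m σ ρ t)) := by
  refine intervalIntegral.tendsto_integral_filter_of_dominated_convergence
    (fun _ => Aw m (σ^2)) ?_ ?_ ?_ ?_
  · exact Eventually.of_forall fun k =>
      (thk_smooth m σ ρ hσ k).continuous.aestronglyMeasurable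
  · exact Eventually.of_forall fun k => Eventually.of_forall fun t _ => thk_bound m σ ρ hσ k t
  · exact intervalIntegrable_const
  · exact Eventually.of_forall fun t _ => thk_tendsto m σ ρ t

lemma Aw_int (m : ℕ) (s ρ : ℝ) (hs : 0 < s) (h : s ≤ ρ^2) :
    m * ∫ t in s..(ρ^2), Aw m t = s ^ (-(m:ℝ)/2) - (ρ^2) ^ (-(m:ℝ)/2) := by
  have hd : ∀ t ∈ uIcc s (ρ^2), HasDerivAt (fun t : ℝ => -t ^ (-(m:ℝ)/2)) (m * Aw m t) t := by
    intro t ht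
    rw [uIcc_of_le h] at ht
    have h0 : t ≠ 0 := (lt_of_lt_of_le hs ht.1).ne'
    refine (Real.hasDerivAt_rpow_const (p := -(m:ℝ)/2) (Or.inl h0)).neg.congr_deriv ?_
    unfold Aw
    rw [show -(m:ℝ)/2 - 1 = -((m:ℝ)+2)/2 by ring]
    ring
  have hc : ContinuousOn (fun t => m * Aw m t) (uIcc s (ρ^2)) := by
    rw [uIcc_of_le h]
    unfold Aw
    refine continuousOn_const.mul (continuousOn_const.mul
      (continuousOn_id.rpow_const fun t ht => Or.inl (lt_of_lt_of_le hs ht.1).ne'))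
  rw [← intervalIntegral.integral_const_mul,
    intervalIntegral.integral_eq_sub_of_hasDerivAt hd hc.intervalIntegrable]
  ring

lemma th_int (m : ℕ) (σ ρ s : ℝ) (hσ : 0 < σ) (hσρ : σ < ρ) (h : s ≤ ρ^2) :
    m * ∫ t in (ρ^2)..s, th m σ ρ t = (ρ^2) ^ (-(m:ℝ)/2) - (max s (σ^2)) ^ (-(m:ℝ)/2) := by
  have hle : max s (σ^2) ≤ ρ^2 := max_le h (by gcongr)
  rw [intervalIntegral.integral_symm, intervalIntegral.integral_of_le h,
    show th m σ ρ = (Ioo (σ^2) (ρ^2)).indicator (Aw m) from rfl,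
    setIntegral_indicator measurableSet_Ioo]
  have : Ioc s (ρ^2) ∩ Ioo (σ^2) (ρ^2) = Ioo (max s (σ^2)) (ρ^2) := by
    ext t
    simp only [mem_inter_iff, mem_Ioc, mem_Ioo, max_lt_iff]
    constructor
    · rintro ⟨⟨h1, h2⟩, h3, h4⟩; exact ⟨⟨h1, h3⟩, h4⟩
    · rintro ⟨⟨h1, h3⟩, h4⟩; exact ⟨⟨h1, h4.le⟩, h3, h4⟩
  rw [this, ← integral_Ioc_eq_integral_Ioo, ← intervalIntegral.integral_of_le hle]
  have := Aw_int m (max s (σ^2)) ρ (lt_of_lt_of_le (by positivity) (le_max_right _ _)) hle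
  linarith

lemma sq_rpow (m : ℕ) (d : ℝ) (hd : 0 < d) : (d^2) ^ (-(m:ℝ)/2) = d ^ (-(m:ℝ)) := by
  rw [← Real.rpow_natCast d 2, ← Real.rpow_mul hd.le]
  congr 1; push_cast; ring

lemma Aw_sq (m : ℕ) (d : ℝ) (hd : 0 < d) : 2 * Aw m (d^2) = d ^ (-(m:ℝ)) * (d⁻¹)^2 := by
  unfold Aw
  rw [← Real.rpow_natCast d 2, ← Real.rpow_mul hd.le, inv_pow, ← Real.rpow_natCast d 2,
    ← Real.rpow_neg hd.le, ← Real.rpow_add hd, ← mul_assoc]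
  norm_num
  congr 1; ring

lemma limit_coef (m : ℕ) (σ ρ d : ℝ) (hσ : 0 < σ) (hσρ : σ < ρ) (hd : 0 ≤ d) (h1 : d ≠ σ)
    (h2 : d ≠ ρ) :
    m * (∫ t in (ρ^2)..(d^2), th m σ ρ t) + 2 * th m σ ρ (d^2) * d^2 =
      (if d < ρ then ρ ^ (-(m:ℝ)) else 0) - (if d < σ then σ ^ (-(m:ℝ)) else 0) := by
  have hρ : 0 < ρ := hσ.trans hσρ
  rcases lt_or_gt_of_ne h1 with h | h
  · have hs : d^2 < σ^2 := by gcongr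
    rw [th_int m σ ρ _ hσ hσρ (by gcongr; linarith), max_eq_right hs.le, sq_rpow _ _ hσ,
      sq_rpow _ _ hρ, if_pos (h.trans hσρ), if_pos h, th, indicator_of_notMem]
    · ring
    · exact fun h => absurd h.1 (not_lt.2 hs.le)
  · have hd0 : 0 < d := hσ.trans h
    have hs : σ^2 < d^2 := by gcongr
    rw [if_neg (not_lt.2 h.le)]
    rcases lt_or_gt_of_ne h2 with h' | h'
    · have hs' : d^2 < ρ^2 := by gcongr
      rw [th_int m σ ρ _ hσ hσρ hs'.le, max_eq_left hs.le, sq_rpow _ _ hd0, sq_rpow _ _ hρ,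
        if_pos h', th, indicator_of_mem (show d^2 ∈ Ioo (σ^2) (ρ^2) from ⟨hs, hs'⟩), Aw_sq _ _ hd0]
      field_simp
      ring
    · have hs' : ρ^2 < d^2 := by gcongr
      rw [if_neg (not_lt.2 h'.le), th, indicator_of_notMem
        (show d^2 ∉ Ioo (σ^2) (ρ^2) from fun h => absurd h.2 (not_lt.2 hs'.le)), intervalIntegral.integral_congr (g := fun _ => 0)]
      · simp
      · intro t ht
        rw [uIcc_of_le hs'.le] at ht
        exact indicator_of_notMem (fun h => absurd h.2 (not_lt.2 ht.1)) _

lemma main_identity {m p : ℕ} (Ω : Set (EuclideanSpace ℝ (Fin (m+2)))) (hΩ : IsOpen Ω)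
    (u : EuclideanSpace ℝ (Fin (m+2)) → EuclideanSpace ℝ (Fin p))
    (g : EuclideanSpace ℝ (Fin (m+2)) →
      (EuclideanSpace ℝ (Fin (m+2)) →L[ℝ] EuclideanSpace ℝ (Fin p)))
    (hu : IsEnergyMinimizingToSphere (m+2) p Ω u g)
    (y : EuclideanSpace ℝ (Fin (m+2))) (ρ₀ : ℝ) (hρ₀ : 0 < ρ₀)
    (hB : closedBall y ρ₀ ⊆ Ω) (σ ρ : ℝ) (hσ : 0 < σ) (hσρ : σ < ρ) (hρρ : ρ < ρ₀) :
    ρ ^ (-(m:ℝ)) * (∫ x in ball y ρ, energyDensity (m+2) p g x) -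
          σ ^ (-(m:ℝ)) * (∫ x in ball y σ, energyDensity (m+2) p g x) =
        2 * ∫ x in ball y ρ \ ball y σ,
          ‖x - y‖ ^ (-(m:ℝ)) * ‖g x (‖x - y‖⁻¹ • (x - y))‖ ^ 2 := by
  have hρ : 0 < ρ := hσ.trans hσρ
  set e := energyDensity (m+2) p g with he
  set w : EuclideanSpace ℝ (Fin (m+2)) → ℝ := fun x => ‖g x (x - y)‖^2 with hw
  have heI : IntegrableOn e (ball y ρ₀) :=
    (hu.2.1.integrableOn_compact_subset hB (isCompact_closedBall y ρ₀)).mono_set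
      ball_subset_closedBall
  have hwI : IntegrableOn w (ball y ρ₀) :=
    ((locInt_apply_sq Ω hΩ y g hu.1.2.1 hu.2.1).integrableOn_compact_subset hB
      (isCompact_closedBall y ρ₀)).mono_set ball_subset_closedBall
  have hcs : Continuous fun x : EuclideanSpace ℝ (Fin (m+2)) => ‖x - y‖^2 := by fun_prop
  set G : ℕ → EuclideanSpace ℝ (Fin (m+2)) → ℝ := fun k x =>
    (m * etk m σ ρ k (‖x - y‖^2) + 2 * thk m σ ρ k (‖x - y‖^2) * ‖x - y‖^2) * e x
      - 4 * thk m σ ρ k (‖x - y‖^2) * w x with hG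
  set G' : EuclideanSpace ℝ (Fin (m+2)) → ℝ := fun x =>
    (m * (∫ t in (ρ^2)..(‖x - y‖^2), th m σ ρ t) + 2 * th m σ ρ (‖x - y‖^2) * ‖x - y‖^2) * e x
      - 4 * th m σ ρ (‖x - y‖^2) * w x with hG'
  have hGk : ∀ k, ∫ x in ball y ρ₀, G k x = 0 := by
    intro k
    have := stationary Ω hΩ u g hu y ρ ρ₀ hρ₀ hρρ hρ hB (etk m σ ρ k) (etk_smooth m σ ρ hσ k)
      (etk_right m σ ρ k)
    simp only [(etk_deriv m σ ρ hσ k _).deriv] at this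
    exact this
  set B := Aw m (σ^2) with hBdef
  have hB0 : 0 ≤ B := Aw_nonneg m (by positivity)
  have hlim : Tendsto (fun k => ∫ x in ball y ρ₀, G k x) atTop
      (nhds (∫ x in ball y ρ₀, G' x)) := by
    refine tendsto_integral_of_dominated_convergence
      (fun x => (m * (B * (ρ₀^2 + ρ^2)) + 2 * B * ρ₀^2) * e x + 4 * B * w x) ?_ ?_ ?_ ?_
    · intro k
      have c1 := (etk_smooth m σ ρ hσ k).continuous
      have c2 := (thk_smooth m σ ρ hσ k).continuous
      refine AEStronglyMeasurable.sub (AEStronglyMeasurable.mul ?_ heI.aestronglyMeasurable)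
        (AEStronglyMeasurable.mul ?_ hwI.aestronglyMeasurable)
      · refine Continuous.aestronglyMeasurable ?_
        fun_prop
      · refine Continuous.aestronglyMeasurable ?_
        fun_prop
    · exact (heI.const_mul _).add (hwI.const_mul _)
    · intro k
      filter_upwards [ae_restrict_mem measurableSet_ball] with x hx
      have e0 : 0 ≤ e x := energyDensity_nonneg _ _ _ _
      have w0 : 0 ≤ w x := by positivity
      rw [mem_ball, dist_eq_norm] at hx
      have hd : ‖x - y‖^2 ≤ ρ₀^2 := by gcongr
      have b1 : |etk m σ ρ k (‖x - y‖^2)| ≤ B * (ρ₀^2 + ρ^2) := by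
        refine (etk_bound m σ ρ hσ k _).trans ?_
        gcongr
        rw [abs_le]
        constructor <;> nlinarith [sq_nonneg ‖x - y‖, sq_nonneg ρ, sq_nonneg ρ₀]
      have b2 : |thk m σ ρ k (‖x - y‖^2)| ≤ B := thk_bound m σ ρ hσ k _
      refine (norm_sub_le _ _).trans ?_
      rw [norm_mul, norm_mul, Real.norm_of_nonneg e0, Real.norm_of_nonneg w0]
      gcongr
      · refine (norm_add_le _ _).trans ?_
        simp only [norm_mul, Real.norm_eq_abs, abs_pow, abs_norm, Nat.abs_cast, Nat.abs_ofNat]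
        gcongr
      · rw [norm_mul, Real.norm_eq_abs, Real.norm_eq_abs, Nat.abs_ofNat]
        gcongr
    · refine Eventually.of_forall fun x => ?_
      exact ((((etk_tendsto m σ ρ hσ _).const_mul _).add
        (((thk_tendsto m σ ρ _).const_mul 2).mul_const _)).mul_const _).sub
        (((thk_tendsto m σ ρ _).const_mul 4).mul_const _)
  have hG0 : ∫ x in ball y ρ₀, G' x = 0 := by
    refine tendsto_nhds_unique hlim ?_
    simp only [hGk]
    exact tendsto_const_nhds
  set f : EuclideanSpace ℝ (Fin (m+2)) → ℝ := fun x =>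
    ‖x - y‖ ^ (-(m:ℝ)) * ‖g x (‖x - y‖⁻¹ • (x - y))‖ ^ 2 with hf
  have hfw : ∀ x, f x = (‖x - y‖ ^ (-(m:ℝ)) * (‖x - y‖⁻¹)^2) * w x := by
    intro x
    simp only [hf, hw, map_smul, norm_smul, norm_inv, norm_norm]
    ring
  have hae : ∀ᵐ x ∂(volume.restrict (ball y ρ₀)), G' x =
      ((ball y ρ).indicator (fun x => ρ ^ (-(m:ℝ)) * e x) x -
        (ball y σ).indicator (fun x => σ ^ (-(m:ℝ)) * e x) x) -
        (ball y ρ \ ball y σ).indicator (fun x => 2 * f x) x := by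
    have hnull : ∀ r : ℝ, 0 < r →
        ∀ᵐ x ∂(volume : Measure (EuclideanSpace ℝ (Fin (m+2)))), ‖x - y‖ ≠ r := by
      intro r hr
      rw [ae_iff]
      have := Measure.addHaar_sphere
        (volume : Measure (EuclideanSpace ℝ (Fin (m+2)))) y r
      convert this using 2
      ext x
      simp [dist_eq_norm]
    filter_upwards [ae_restrict_of_ae (hnull σ hσ), ae_restrict_of_ae (hnull ρ hρ)] with x h1 h2
    simp only [hG']
    rw [limit_coef m σ ρ ‖x - y‖ hσ hσρ (norm_nonneg _) h1 h2]
    have m1 : ∀ r, x ∈ ball y r ↔ ‖x - y‖ < r := fun r => by rw [mem_ball, dist_eq_norm]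
    have t1 : 4 * th m σ ρ (‖x - y‖^2) * w x =
        (ball y ρ \ ball y σ).indicator (fun x => 2 * f x) x := by
      by_cases hx : σ < ‖x - y‖ ∧ ‖x - y‖ < ρ
      · have hx0 : 0 < ‖x - y‖ := hσ.trans hx.1
        rw [indicator_of_mem, th, indicator_of_mem, hfw, ← Aw_sq m _ hx0]
        · ring
        · exact ⟨by have := hx.1; gcongr, by have := hx.2; gcongr⟩
        · exact ⟨(m1 ρ).2 hx.2, fun h => absurd ((m1 σ).1 h) (not_lt.2 hx.1.le)⟩
      · rw [indicator_of_notMem, th, indicator_of_notMem]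
        · simp
        · intro h
          exact hx ⟨lt_of_pow_lt_pow_left₀ 2 (norm_nonneg _) h.1,
            lt_of_pow_lt_pow_left₀ 2 hρ.le h.2⟩
        · intro h
          refine hx ⟨?_, (m1 ρ).1 h.1⟩
          exact lt_of_le_of_ne (not_lt.1 fun h' => h.2 ((m1 σ).2 h')) h1.symm
    have k : ∀ r : ℝ, (ball y r).indicator (fun x => r ^ (-(m:ℝ)) * e x) x =
        (if ‖x - y‖ < r then r ^ (-(m:ℝ)) else 0) * e x := by
      intro r
      by_cases h : ‖x-y‖ < r
      · rw [indicator_of_mem ((m1 r).2 h), if_pos h]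
      · rw [indicator_of_notMem (fun h' => h ((m1 r).1 h')), if_neg h, zero_mul]
    rw [t1, sub_mul, k ρ, k σ]
  have hρs : ball y ρ ⊆ ball y ρ₀ := ball_subset_ball hρρ.le
  have hσs : ball y σ ⊆ ball y ρ₀ := ball_subset_ball (hσρ.trans hρρ).le
  have hAs : ball y ρ \ ball y σ ⊆ ball y ρ₀ := sdiff_subset.trans hρs
  have hAm : MeasurableSet (ball y ρ \ ball y σ) := measurableSet_ball.diff measurableSet_ball
  have hfI : IntegrableOn f (ball y ρ \ ball y σ) := by
    have hwA : IntegrableOn w (ball y ρ \ ball y σ) := hwI.mono_set hAs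
    rw [show f = _ from funext hfw]
    refine Integrable.mono' (hwA.const_mul (2 * B)) ?_ ?_
    · refine AEStronglyMeasurable.mul ?_ hwA.aestronglyMeasurable
      refine Measurable.aestronglyMeasurable ?_
      have : Measurable fun x : EuclideanSpace ℝ (Fin (m+2)) => ‖x - y‖ := by fun_prop
      exact (this.pow_const _).mul (this.inv.pow_const 2)
    · filter_upwards [ae_restrict_mem hAm] with x hx
      have hx1 : σ ≤ ‖x - y‖ := by
        have := hx.2
        rwa [mem_ball, dist_eq_norm, not_lt] at this
      have w0 : 0 ≤ w x := by positivity
      have hx0 := lt_of_lt_of_le hσ hx1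
      rw [← Aw_sq m _ hx0, norm_mul, Real.norm_of_nonneg w0, Real.norm_of_nonneg
        (mul_nonneg zero_le_two (Aw_nonneg m (by positivity)))]
      gcongr
      exact Aw_anti m (by positivity) (by gcongr)
  have i1 : IntegrableOn ((ball y ρ).indicator (fun x => ρ ^ (-(m:ℝ)) * e x)) (ball y ρ₀) :=
    (heI.const_mul _).indicator measurableSet_ball
  have i2 : IntegrableOn ((ball y σ).indicator (fun x => σ ^ (-(m:ℝ)) * e x)) (ball y ρ₀) :=
    (heI.const_mul _).indicator measurableSet_ball
  have i3 : IntegrableOn ((ball y ρ \ ball y σ).indicator (fun x => 2 * f x)) (ball y ρ₀) :=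
    ((integrable_indicator_iff hAm).2 (hfI.const_mul 2)).integrableOn
  have i12 : IntegrableOn (fun x => (ball y ρ).indicator (fun x => ρ ^ (-(m:ℝ)) * e x) x -
      (ball y σ).indicator (fun x => σ ^ (-(m:ℝ)) * e x) x) (ball y ρ₀) := i1.sub i2
  rw [integral_congr_ae hae, integral_sub i12 i3, integral_sub i1 i2,
    setIntegral_indicator measurableSet_ball, setIntegral_indicator measurableSet_ball,
    setIntegral_indicator hAm, inter_eq_right.2 hρs, inter_eq_right.2 hσs, inter_eq_right.2 hAs,
    integral_const_mul, integral_const_mul, integral_const_mul] at hG0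
  linarith

/-- Theorem 1 of the paper (the monotonicity formula), for energy minimizing maps into
the unit sphere: for every `y ∈ Ω` and `ρ₀ > 0` with `B̄_{ρ₀}(y) ⊆ Ω` and every
`0 < σ < ρ < ρ₀`, the monotonicity identity holds; in particular the scaled energy
`ρ ↦ ρ^(2-n) ∫_{B_ρ(y)} |Du|²` is monotone nondecreasing on `(0, ρ₀)`. -/
theorem monotonicity_formula
    (n p : ℕ) (hn : 2 ≤ n) (hp : 2 ≤ p)
    (Ω : Set (EuclideanSpace ℝ (Fin n))) (hΩ : IsOpen Ω)
    (u : EuclideanSpace ℝ (Fin n) → EuclideanSpace ℝ (Fin p))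
    (g : EuclideanSpace ℝ (Fin n) →
      (EuclideanSpace ℝ (Fin n) →L[ℝ] EuclideanSpace ℝ (Fin p)))
    (hu : IsEnergyMinimizingToSphere n p Ω u g) :
    ∀ y ∈ Ω, ∀ ρ₀ : ℝ, 0 < ρ₀ → closedBall y ρ₀ ⊆ Ω →
      (∀ σ ρ : ℝ, 0 < σ → σ < ρ → ρ < ρ₀ →
        ρ ^ ((2 : ℝ) - n) * (∫ x in ball y ρ, energyDensity n p g x) -
          σ ^ ((2 : ℝ) - n) * (∫ x in ball y σ, energyDensity n p g x) =
        2 * ∫ x in ball y ρ \ ball y σ,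
          ‖x - y‖ ^ ((2 : ℝ) - n) * ‖g x (‖x - y‖⁻¹ • (x - y))‖ ^ 2) ∧
      MonotoneOn
        (fun ρ : ℝ => ρ ^ ((2 : ℝ) - n) * ∫ x in ball y ρ, energyDensity n p g x)
        (Ioo 0 ρ₀) := by
  obtain ⟨m, rfl⟩ : ∃ m, n = m + 2 := ⟨n - 2, by omega⟩
  have hexp : (2:ℝ) - ((m + 2 : ℕ) : ℝ) = -(m:ℝ) := by push_cast; ring
  rw [hexp]
  intro y _ ρ₀ hρ₀ hB
  have key := main_identity Ω hΩ u g hu y ρ₀ hρ₀ hB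
  refine ⟨key, ?_⟩
  intro σ hσ ρ hρ hle
  rcases hle.eq_or_lt with rfl | hlt
  · exact le_rfl
  · have h := key σ ρ hσ.1 hlt hρ.2
    have h0 : 0 ≤ ∫ x in ball y ρ \ ball y σ,
        ‖x - y‖ ^ (-(m:ℝ)) * ‖g x (‖x - y‖⁻¹ • (x - y))‖ ^ 2 :=
      integral_nonneg fun x => by positivity
    simp only
    linarith
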